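/- Let F be an algebraically closed field with characteristic ≠ 2 and ≠ 3. Then the derivation algebras of the algebra E3 with MSC [[0,0,0,1],[1,0,0,0]] and of the algebra E4 with MSC [[1,0,0,1],[0,0,0,0]] are both zero: Der(E3) = Der(E4) = {0}. -/

import Mathlib

open Matrix Kronecker

variable {F : Type*}

/-- The Kronecker (tensor) product of two `2 × 2` matrices, realized as a `4 × 4` matrix;
rows/columns are indexed in row-major order by the pairs `(1,1), (1,2), (2,1), (2,2)`. -/
def kron [CommRing F] (g h : Matrix (Fin 2) (Fin 2) F) : Matrix (Fin 4) (Fin 4) F :=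
  Matrix.reindex finProdFinEquiv finProdFinEquiv (g ⊗ₖ h)

/-- Two `2`-dimensional algebras given by matrices of structure constants `A, B`
are isomorphic iff `B = g · A · (g⁻¹ ⊗ g⁻¹)` for some `g ∈ GL(2, F)`. -/
def Isomorphic [Field F] (A B : Matrix (Fin 2) (Fin 4) F) : Prop :=
  ∃ g : GL (Fin 2) F,
    B = (g : Matrix (Fin 2) (Fin 2) F) * A *
        kron ((↑(g⁻¹) : Matrix (Fin 2) (Fin 2) F)) ((↑(g⁻¹) : Matrix (Fin 2) (Fin 2) F))

/-- The automorphism group of the algebra with MSC `E`, as a set of (invertible) `2 × 2`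
matrices: `Aut(E) = {g ∈ GL(2,F) : g·E = E·(g ⊗ g)}`. -/
def Aut [Field F] (E : Matrix (Fin 2) (Fin 4) F) : Set (Matrix (Fin 2) (Fin 2) F) :=
  {g | IsUnit g ∧ g * E = E * kron g g}

/-- The derivation algebra of the algebra with MSC `E`:
`Der(E) = { D : E·(D ⊗ I + I ⊗ D) = D·E }`. -/
def Der [Field F] (E : Matrix (Fin 2) (Fin 4) F) : Set (Matrix (Fin 2) (Fin 2) F) :=
  {D | E * (kron D 1 + kron 1 D) = D * E}

/-!
A matrix `D` lies in `Der E` exactly when it satisfies the Leibniz rule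
`D (u · v) = (D u) · v + u · (D v)`, and on the basis vectors `e₁, e₂` this is a short linear
system. For `E3` (`e₁² = e₂`, `e₂² = e₁`) the two squares make `D` diagonal with `D₂₂ = 2 D₁₁` and
`D₁₁ = 2 D₂₂`, so `3 D₁₁ = 0`. For `E4` (`e₁² = e₂² = e₁`, `e₁e₂ = e₂e₁ = 0`) the square of `e₁`
forces `D e₁ = 0`; then `e₁e₂ = 0` gives `D₁₂ = 0`, and `e₂² = e₁` gives `2 D₂₂ = 0`.
-/

section Product

variable [CommSemiring F]

/-- The coordinate vector of the tensor `u ⊗ v`, in the row-major order used by `kron`.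
It is phrased through `Matrix.vec`, which stacks columns; hence the swap of `u` and `v`. -/
def kronVec (u v : Fin 2 → F) : Fin 4 → F :=
  vec (vecMulVec v u) ∘ (finProdFinEquiv (m := 2) (n := 2)).symm

/-- The product `u · v = E (u ⊗ v)` of the algebra with MSC `E`. -/
def mscMul (E : Matrix (Fin 2) (Fin 4) F) (u v : Fin 2 → F) : Fin 2 → F :=
  E *ᵥ kronVec u v

theorem kronVec_eq (u v : Fin 2 → F) :
    kronVec u v = ![u 0 * v 0, u 0 * v 1, u 1 * v 0, u 1 * v 1] := by
  ext k
  fin_cases k <;> exact mul_comm (v _) (u _)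

theorem kronVec_single_single (i j : Fin 2) :
    kronVec (Pi.single i (1 : F)) (Pi.single j 1) = Pi.single (finProdFinEquiv (i, j)) 1 := by
  rw [kronVec, ← single_eq_single_vecMulVec_single, vec_single]
  exact Pi.single_comp_equiv finProdFinEquiv.symm (i, j) 1

theorem ext_of_mulVec_kronVec {M N : Matrix (Fin 2) (Fin 4) F}
    (h : ∀ u v, M *ᵥ kronVec u v = N *ᵥ kronVec u v) : M = N := by
  refine ext_of_mulVec_single fun k => ?_
  obtain ⟨⟨i, j⟩, rfl⟩ := (finProdFinEquiv (m := 2) (n := 2)).surjective k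
  simpa only [kronVec_single_single] using h (Pi.single i 1) (Pi.single j 1)

theorem mscMul_E3 (u v : Fin 2 → F) :
    mscMul !![0, 0, 0, 1; 1, 0, 0, 0] u v = ![u 1 * v 1, u 0 * v 0] := by
  ext i
  fin_cases i <;> simp [mscMul, kronVec_eq, mulVec, dotProduct, Fin.sum_univ_four]

theorem mscMul_E4 (u v : Fin 2 → F) :
    mscMul !![1, 0, 0, 1; 0, 0, 0, 0] u v = ![u 0 * v 0 + u 1 * v 1, 0] := by
  ext i
  fin_cases i <;> simp [mscMul, kronVec_eq, mulVec, dotProduct, Fin.sum_univ_four]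

end Product

theorem kron_mulVec_kronVec [CommRing F] (g h : Matrix (Fin 2) (Fin 2) F) (u v : Fin 2 → F) :
    kron g h *ᵥ kronVec u v = kronVec (g *ᵥ u) (h *ᵥ v) := by
  rw [kron, reindex_apply, submatrix_mulVec_equiv, kronVec, Function.comp_assoc,
    Equiv.symm_symm, Equiv.symm_comp_self, Function.comp_id, kronecker_mulVec_vec,
    mul_vecMulVec, vecMulVec_mul, vecMul_transpose, kronVec]

section Derivation

variable [Field F]

theorem mem_der_iff {E : Matrix (Fin 2) (Fin 4) F} {D : Matrix (Fin 2) (Fin 2) F} :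
    D ∈ Der E ↔ ∀ u v, D *ᵥ mscMul E u v = mscMul E (D *ᵥ u) v + mscMul E u (D *ᵥ v) := by
  have left_side (u v : Fin 2 → F) : (E * (kron D 1 + kron 1 D)) *ᵥ kronVec u v =
      mscMul E (D *ᵥ u) v + mscMul E u (D *ᵥ v) := by
    simp only [mscMul, ← mulVec_mulVec, add_mulVec, mulVec_add, kron_mulVec_kronVec, one_mulVec]
  have right_side (u v : Fin 2 → F) : (D * E) *ᵥ kronVec u v = D *ᵥ mscMul E u v := by
    rw [← mulVec_mulVec, mscMul]
  simp only [← left_side, ← right_side]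
  exact ⟨fun hD _ _ => congrArg (· *ᵥ _) hD.symm,
    fun leibniz => ext_of_mulVec_kronVec fun u v => (leibniz u v).symm⟩

theorem zero_mem_der (E : Matrix (Fin 2) (Fin 4) F) : 0 ∈ Der E := by
  simp [mem_der_iff, mscMul, kronVec]

theorem der_E3_eq_singleton_zero (h3 : (3 : F) ≠ 0) :
    Der (!![0, 0, 0, 1; 1, 0, 0, 0] : Matrix (Fin 2) (Fin 4) F) = {0} := by
  refine Set.eq_singleton_iff_unique_mem.mpr ⟨zero_mem_der _, fun D hD => ?_⟩
  have leibniz := mem_der_iff.mp hD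
  simp only [mscMul_E3, funext_iff, Fin.forall_fin_two, mulVec, vec2_dotProduct, Pi.add_apply,
    cons_val_zero, cons_val_one] at leibniz
  obtain ⟨d01, d11⟩ : D 0 1 = 0 ∧ D 1 1 = 2 * D 0 0 := by
    simpa [two_mul] using leibniz ![1, 0] ![1, 0]
  obtain ⟨d00, d10⟩ : D 0 0 = 2 * D 1 1 ∧ D 1 0 = 0 := by
    simpa [two_mul] using leibniz ![0, 1] ![0, 1]
  have three_mul_d00 : 3 * D 0 0 = 0 := by linear_combination -d00 - 2 * d11
  have d00_zero : D 0 0 = 0 := (mul_eq_zero.mp three_mul_d00).resolve_left h3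
  rw [eta_fin_two D, d11, d00_zero, d01, d10, mul_zero]
  exact (eta_fin_two 0).symm

theorem der_E4_eq_singleton_zero (h2 : (2 : F) ≠ 0) :
    Der (!![1, 0, 0, 1; 0, 0, 0, 0] : Matrix (Fin 2) (Fin 4) F) = {0} := by
  refine Set.eq_singleton_iff_unique_mem.mpr ⟨zero_mem_der _, fun D hD => ?_⟩
  have leibniz := mem_der_iff.mp hD
  simp only [mscMul_E4, funext_iff, Fin.forall_fin_two, mulVec, vec2_dotProduct, Pi.add_apply,
    cons_val_zero, cons_val_one] at leibniz
  obtain ⟨d00, d10⟩ : D 0 0 = 0 ∧ D 1 0 = 0 := by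
    simpa using leibniz ![1, 0] ![1, 0]
  have d01 : D 0 1 = 0 := by
    simpa [d10, eq_comm] using leibniz ![1, 0] ![0, 1]
  have two_mul_d11 : 2 * D 1 1 = 0 := by
    simpa [d00, two_mul, eq_comm] using (leibniz ![0, 1] ![0, 1]).1
  have d11 : D 1 1 = 0 := (mul_eq_zero.mp two_mul_d11).resolve_left h2
  rw [eta_fin_two D, d00, d01, d10, d11]
  exact (eta_fin_two 0).symm

end Derivation

theorem der_E3_and_E4_general (F : Type*) [Field F]
    (h2 : ringChar F ≠ 2) (h3 : ringChar F ≠ 3) :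
    Der (!![0, 0, 0, 1; 1, 0, 0, 0] : Matrix (Fin 2) (Fin 4) F) = {0} ∧
    Der (!![1, 0, 0, 1; 0, 0, 0, 0] : Matrix (Fin 2) (Fin 4) F) = {0} := by
  have h3F : (3 : F) ≠ 0 := fun h =>
    h3 (CharP.ringChar_of_prime_eq_zero Nat.prime_three (by exact_mod_cast h))
  exact ⟨der_E3_eq_singleton_zero h3F, der_E4_eq_singleton_zero (Ring.two_ne_zero h2)⟩

theorem der_E3_and_E4 (F : Type*) [Field F] [IsAlgClosed F]
    (h2 : ringChar F ≠ 2) (h3 : ringChar F ≠ 3) :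
    Der (!![0, 0, 0, 1; 1, 0, 0, 0] : Matrix (Fin 2) (Fin 4) F) = {0} ∧
    Der (!![1, 0, 0, 1; 0, 0, 0, 0] : Matrix (Fin 2) (Fin 4) F) = {0} :=
  der_E3_and_E4_general F h2 h3
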